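/- Let μ be a measure on ℝ with all moments finite and infinite support. Assume: (1) μ is determinate, (2) supp(μ) ⊆ [0,∞), (3) 0 ∈ supp(μ), (4) μ({0}) = 0. Then for every k ∈ ℕ₀ the polynomials are dense in L²(x^k·μ), where x^k·μ denotes the measure with density x ↦ x^k with respect to μ (i.e., the density index δ(μ) of μ is infinite). -/

import Mathlib

open MeasureTheory Polynomial Filter

noncomputable section

/-- A measure on `ℝ` has all moments finite. -/
def HasAllMoments (μ : Measure ℝ) : Prop :=
  ∀ n : ℕ, Integrable (fun x : ℝ => |x| ^ n) μ

/-- The (topological) support of a measure on `ℝ`: points all of whose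
neighborhoods have positive measure. -/
def mSupp (μ : Measure ℝ) : Set ℝ :=
  {x : ℝ | ∀ U ∈ nhds x, μ U ≠ 0}

/-- A measure with all moments finite is determinate if it is the unique measure
with all moments finite having its moment sequence. -/
def IsDeterminate (μ : Measure ℝ) : Prop :=
  ∀ ν : Measure ℝ, HasAllMoments ν →
    (∀ n : ℕ, ∫ x, x ^ n ∂ν = ∫ x, x ^ n ∂μ) → ν = μ

/-- The complex polynomial functions are dense in `L²(ν)`. -/
def PolyDense (ν : Measure ℝ) : Prop :=
  Dense {f : Lp ℂ 2 ν | ∃ p : Polynomial ℂ, ⇑f =ᵐ[ν] fun x : ℝ => p.eval (x : ℂ)}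

/-!
Suppose the polynomials are not dense in `L²(w μ)`, where `w` has polynomial growth. By a
Stone–Weierstrass argument some annihilator of the polynomials has a Cauchy transform that does not
vanish at `a + i`; reflecting roots into the lower half-plane, one gets a bound for `p ↦ p(t)` in
the norm of `L²(w μ)`, hence of `L²((1 + x²)ⁿ μ)`, uniform in real `t` near `a`.

The weight is removed one factor `1 + x²` at a time. As `a` carries no mass, the `L²` norm in the
bound may be taken over the complement of a small ball around `a`. As `a` lies in the support, some
`y` well inside that ball has `|p(y)|²` at most a multiple of `∫ |p|² dμ`. Off the ball
`q = (p - p(y)) / (x - y)` satisfies `(1 + x²) |q|² ≤ K |p - p(y)|²`, so the weighted bound for `q`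
becomes an unweighted bound for `p`.

Finally, if `|p(a)|² ≤ c ∫ |p|² dμ`, then `p ↦ ∫ p dμ - c⁻¹ p(a)` is nonnegative on nonnegative
polynomials, and Haviland's theorem represents it by a measure `ν`. Now `ν + c⁻¹ δ_a` has the
moments of `μ` and charges `a`, so `μ` is not determinate.
-/

open scoped CompactlySupported Topology

/-! ### Nonnegative polynomials and reflection of roots -/

lemma norm_ofReal_sub_sq (x : ℝ) (z : ℂ) : ‖(x : ℂ) - z‖ ^ 2 = (x - z.re) ^ 2 + z.im ^ 2 := by
  rw [← Complex.normSq_eq_norm_sq, Complex.normSq_apply]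
  simp only [Complex.sub_re, Complex.ofReal_re, Complex.sub_im, Complex.ofReal_im]
  ring

lemma eval_quadratic (z : ℂ) (x : ℝ) :
    (X ^ 2 - C (2 * z.re) * X + C (‖z‖ ^ 2) : ℝ[X]).eval x = ‖(x : ℂ) - z‖ ^ 2 := by
  rw [norm_ofReal_sub_sq, ← Complex.normSq_eq_norm_sq, Complex.normSq_apply]
  simp only [eval_add, eval_sub, eval_mul, eval_pow, eval_X, eval_C]
  ring

lemma sq_X_sub_C_dvd_of_eval_nonneg {p : ℝ[X]} (hp0 : p ≠ 0) (hp : ∀ x, 0 ≤ p.eval x) {a : ℝ}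
    (ha : p.IsRoot a) : (X - C a) ^ 2 ∣ p := by
  have hmin : IsLocalMin (fun x => p.eval x) a := Eventually.of_forall fun x => ha.trans_le (hp x)
  have hderiv : (derivative p).IsRoot a := by
    rw [IsRoot.def, ← Polynomial.deriv]
    exact hmin.deriv_eq_zero
  exact (le_rootMultiplicity_iff hp0).mp ((one_lt_rootMultiplicity_iff_isRoot hp0).mpr ⟨ha, hderiv⟩)

lemma quadratic_dvd_of_eval_nonneg {p : ℝ[X]} (hp0 : p ≠ 0) (hp : ∀ x, 0 ≤ p.eval x) {z : ℂ}
    (hz : aeval z p = 0) : X ^ 2 - C (2 * z.re) * X + C (‖z‖ ^ 2) ∣ p := by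
  by_cases him : z.im = 0
  · obtain ⟨a, rfl⟩ : ∃ a : ℝ, (a : ℂ) = z := ⟨z.re, Complex.ext rfl him.symm⟩
    have ha : p.IsRoot a := by
      rw [← Complex.coe_algebraMap, aeval_algebraMap_apply] at hz
      simpa using hz
    convert! sq_X_sub_C_dvd_of_eval_nonneg hp0 hp ha using 1
    simp only [Complex.ofReal_re, Complex.norm_real, Real.norm_eq_abs, sq_abs, map_mul, map_pow,
      map_ofNat]
    ring
  · exact quadratic_dvd_of_aeval_eq_zero_im_ne_zero p hz him

lemma eval_nonneg_of_forall_ne {r : ℝ[X]} {a : ℝ} (h : ∀ x ≠ a, 0 ≤ r.eval x) (x : ℝ) :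
    0 ≤ r.eval x :=
  (isClosed_le continuous_const r.continuous).closure_subset_iff.mpr h (dense_compl_singleton a x)

theorem exists_norm_eval_sq_eq_of_eval_nonneg (p : ℝ[X]) (hp : ∀ x, 0 ≤ p.eval x) :
    ∃ s : ℂ[X], ∀ x : ℝ, ‖s.eval (x : ℂ)‖ ^ 2 = p.eval x := by
  induction hn : p.natDegree using Nat.strong_induction_on generalizing p with
  | _ n ih =>
  by_cases hdeg : p.natDegree = 0
  · obtain ⟨a, rfl⟩ := natDegree_eq_zero.mp hdeg
    have ha : 0 ≤ a := by simpa using hp 0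
    exact ⟨C (√a : ℂ), fun x => by simp [Real.sq_sqrt ha]⟩
  have hp0 : p ≠ 0 := by rintro rfl; exact hdeg natDegree_zero
  obtain ⟨z, hz⟩ := IsAlgClosed.exists_aeval_eq_zero ℂ p
    (fun h => hdeg (natDegree_eq_of_degree_eq_some h))
  obtain ⟨r, rfl⟩ := quadratic_dvd_of_eval_nonneg hp0 hp hz
  have hr : ∀ x, 0 ≤ r.eval x := eval_nonneg_of_forall_ne (a := z.re) fun x hx => by
    have hpos : 0 < ‖(x : ℂ) - z‖ ^ 2 := by
      rw [norm_ofReal_sub_sq]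
      have := sub_ne_zero.mpr hx
      positivity
    have h := hp x
    rw [eval_mul, eval_quadratic] at h
    exact nonneg_of_mul_nonneg_right h hpos
  have hlt : r.natDegree < n := by
    have hquad : (X ^ 2 - C (2 * z.re) * X + C (‖z‖ ^ 2) : ℝ[X]).natDegree = 2 := by
      compute_degree!
    rw [natDegree_mul (left_ne_zero_of_mul hp0) (right_ne_zero_of_mul hp0), hquad] at hn
    lia
  obtain ⟨s, hs⟩ := ih r.natDegree hlt r hr rfl
  refine ⟨(X - C z) * s, fun x => ?_⟩
  rw [eval_mul, eval_mul, eval_quadratic, ← hs, norm_mul, mul_pow, eval_sub, eval_X, eval_C]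

/-- The polynomial with the same leading coefficient as `p` in which every root of `p` in the upper
half-plane is replaced by its conjugate. It has the same modulus as `p` on the real line and no
root in the open upper half-plane. -/
def reflectRoots (p : ℂ[X]) : ℂ[X] :=
  C p.leadingCoeff * (p.roots.map fun z => X - C (⟨z.re, -|z.im|⟩ : ℂ)).prod

lemma norm_eval_eq_prod_roots (p : ℂ[X]) (z : ℂ) :
    ‖p.eval z‖ = ‖p.leadingCoeff‖ * (p.roots.map fun w => ‖z - w‖).prod := by
  rw [(IsAlgClosed.splits p).eval_eq_prod_roots, norm_mul]
  exact congrArg _ (Multiset.prod_hom' _ (normHom : ℂ →*₀ ℝ) _).symm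

lemma norm_eval_reflectRoots (p : ℂ[X]) (z : ℂ) :
    ‖(reflectRoots p).eval z‖ =
      ‖p.leadingCoeff‖ * (p.roots.map fun w => ‖z - ⟨w.re, -|w.im|⟩‖).prod := by
  simp only [reflectRoots, eval_mul, eval_C, eval_multiset_prod, Multiset.map_map,
    Function.comp_apply, eval_sub, eval_X, norm_mul]
  exact congrArg _ (Multiset.prod_hom' _ (normHom : ℂ →*₀ ℝ) _).symm

lemma norm_eval_reflectRoots_ofReal (p : ℂ[X]) (x : ℝ) :
    ‖(reflectRoots p).eval (x : ℂ)‖ = ‖p.eval (x : ℂ)‖ := by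
  have hroot (w : ℂ) : ‖(x : ℂ) - ⟨w.re, -|w.im|⟩‖ = ‖(x : ℂ) - w‖ := by
    rw [← sq_eq_sq₀ (norm_nonneg _) (norm_nonneg _), norm_ofReal_sub_sq, norm_ofReal_sub_sq,
      neg_sq, sq_abs]
  simp only [norm_eval_reflectRoots, norm_eval_eq_prod_roots p, hroot]

lemma norm_eval_ofReal_le_norm_eval_reflectRoots (p : ℂ[X]) {z : ℂ} (hz : 0 ≤ z.im) :
    ‖p.eval (z.re : ℂ)‖ ≤ ‖(reflectRoots p).eval z‖ := by
  rw [norm_eval_eq_prod_roots, norm_eval_reflectRoots]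
  gcongr
  refine Multiset.prod_map_le_prod_map₀ _ _ (fun _ _ => norm_nonneg _) fun w _ => ?_
  rw [Complex.norm_def, Complex.norm_def]
  gcongr
  simp only [Complex.normSq_apply, Complex.sub_re, Complex.sub_im, Complex.ofReal_re,
    Complex.ofReal_im]
  nlinarith [abs_mul_abs_self w.im, abs_nonneg w.im]

/-! ### Haviland's theorem -/

/-- The real functions dominated by a polynomial: the space on which a functional that is positive
on polynomials is extended by the M. Riesz theorem. No continuity is required. -/
def polyDominated : Submodule ℝ (ℝ → ℝ) where
  carrier := {f | ∃ p : ℝ[X], ∀ x, |f x| ≤ p.eval x}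
  add_mem' := by
    rintro f g ⟨p, hp⟩ ⟨q, hq⟩
    exact ⟨p + q, fun x => by
      simpa only [eval_add, Pi.add_apply] using (abs_add_le _ _).trans (add_le_add (hp x) (hq x))⟩
  zero_mem' := ⟨0, fun x => by simp⟩
  smul_mem' := by
    rintro c f ⟨p, hp⟩
    exact ⟨C |c| * p, fun x => by
      simpa only [eval_mul, eval_C, Pi.smul_apply, smul_eq_mul, abs_mul] using
        mul_le_mul_of_nonneg_left (hp x) (abs_nonneg c)⟩

lemma abs_le_one_add_sq (y : ℝ) : |y| ≤ 1 + y ^ 2 := by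
  nlinarith [sq_nonneg (|y| - 1), abs_nonneg y, sq_abs y]

/-- Polynomials, as elements of `polyDominated`. -/
def polyToDominated : ℝ[X] →ₗ[ℝ] polyDominated :=
  (LinearMap.pi leval).codRestrict polyDominated fun p =>
    ⟨1 + p ^ 2, fun x => by simpa using abs_le_one_add_sq (p.eval x)⟩

@[simp]
lemma polyToDominated_apply (p : ℝ[X]) (x : ℝ) : (polyToDominated p : ℝ → ℝ) x = p.eval x := rfl

lemma polyToDominated_injective : Function.Injective polyToDominated := fun _ _ h =>
  Polynomial.funext fun x => congrFun (congrArg Subtype.val h) x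

/-- Compactly supported continuous functions, as elements of `polyDominated`. -/
def compactlySupportedToDominated : C_c(ℝ, ℝ) →ₗ[ℝ] polyDominated where
  toFun f := ⟨f, by
    obtain ⟨K, hK⟩ := f.continuous.bounded_above_of_compact_support f.hasCompactSupport
    exact ⟨C K, fun x => by simpa using hK x⟩⟩
  map_add' _ _ := rfl
  map_smul' _ _ := rfl

theorem exists_positive_extension_to_polyDominated {L : ℝ[X] →ₗ[ℝ] ℝ}
    (hL : ∀ p : ℝ[X], (∀ x, 0 ≤ p.eval x) → 0 ≤ L p) :
    ∃ g : polyDominated →ₚ[ℝ] ℝ, ∀ p, g (polyToDominated p) = L p := by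
  let e := LinearEquiv.ofInjective polyToDominated polyToDominated_injective
  let F : polyDominated →ₗ.[ℝ] ℝ := ⟨polyToDominated.range, L ∘ₗ e.symm.toLinearMap⟩
  have hFapply (p : ℝ[X]) : F (e p) = L p := congrArg L (e.symm_apply_apply p)
  obtain ⟨g, hgF, hg⟩ := riesz_extension
    ((PointedCone.positive ℝ (ℝ → ℝ)).comap polyDominated.subtype) F
    (fun y hy => by
      obtain ⟨p, rfl⟩ := e.surjective y
      exact (hFapply p).symm ▸ hL p fun x => hy x)
    (fun f => by
      obtain ⟨p, hp⟩ := f.2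
      exact ⟨e p, fun x => neg_le_iff_add_nonneg'.mp (neg_le_of_abs_le (hp x))⟩)
  exact ⟨PositiveLinearMap.mk₀ g fun f hf => hg f hf, fun p => (hgF (e p)).trans (hFapply p)⟩

/-- The compactly supported function `x ↦ p(x) (1 - x² / (N + 1))⁺`. -/
def truncatePoly (p : ℝ[X]) (N : ℕ) : C_c(ℝ, ℝ) where
  toFun x := p.eval x * max 0 (1 - x ^ 2 / (N + 1))
  continuous_toFun := by fun_prop
  hasCompactSupport' := by
    refine HasCompactSupport.mul_left (.intro (isCompact_closedBall 0 (N + 1)) fun x hx => ?_)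
    rw [Metric.mem_closedBall, dist_zero_right, Real.norm_eq_abs, not_le] at hx
    refine max_eq_left (sub_nonpos.mpr ((one_le_div (by positivity)).mpr ?_))
    nlinarith [sq_abs x]

lemma truncatePoly_apply (p : ℝ[X]) (N : ℕ) (x : ℝ) :
    truncatePoly p N x = p.eval x * max 0 (1 - x ^ 2 / (N + 1)) := rfl

lemma cutoff_le_one (N : ℕ) (x : ℝ) : max 0 (1 - x ^ 2 / (N + 1)) ≤ 1 :=
  max_le zero_le_one (sub_le_self _ (by positivity))

lemma abs_truncatePoly_le (p : ℝ[X]) (N : ℕ) (x : ℝ) : |truncatePoly p N x| ≤ |p.eval x| := by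
  rw [truncatePoly_apply, abs_mul, abs_of_nonneg (le_max_left (0 : ℝ) (1 - x ^ 2 / (N + 1)))]
  exact mul_le_of_le_one_right (abs_nonneg _) (cutoff_le_one N x)

lemma abs_truncatePoly_sub_le (p : ℝ[X]) (N : ℕ) (x : ℝ) :
    |truncatePoly p N x - p.eval x| ≤ x ^ 2 * |p.eval x| / (N + 1) := by
  have hcutoff : |max 0 (1 - x ^ 2 / (N + 1)) - 1| ≤ x ^ 2 / (N + 1) := by
    rw [abs_sub_comm, abs_of_nonneg (sub_nonneg.mpr (cutoff_le_one N x))]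
    linarith [le_max_right 0 (1 - x ^ 2 / (N + 1))]
  calc |truncatePoly p N x - p.eval x|
      = |p.eval x| * |max 0 (1 - x ^ 2 / (N + 1)) - 1| := by
        rw [truncatePoly_apply, ← abs_mul]; ring_nf
    _ ≤ |p.eval x| * (x ^ 2 / (N + 1)) := by gcongr
    _ = x ^ 2 * |p.eval x| / (N + 1) := by ring

lemma tendsto_const_div_add_one (K : ℝ) :
    Tendsto (fun N : ℕ => K / (N + 1)) atTop (𝓝 0) := by
  simpa [div_eq_mul_inv] using tendsto_one_div_add_atTop_nhds_zero_nat.const_mul K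

lemma tendsto_truncatePoly (p : ℝ[X]) (x : ℝ) :
    Tendsto (fun N => truncatePoly p N x) atTop (𝓝 (p.eval x)) := by
  rw [tendsto_iff_norm_sub_tendsto_zero]
  exact squeeze_zero (fun _ => norm_nonneg _) (fun N => abs_truncatePoly_sub_le p N x)
    (tendsto_const_div_add_one _)

section Representation

variable {g : polyDominated →ₚ[ℝ] ℝ} {ν : Measure ℝ} [IsFiniteMeasureOnCompacts ν]

lemma integrable_eval_of_nonneg
    (hν : ∀ f : C_c(ℝ, ℝ), ∫ x, f x ∂ν = g (compactlySupportedToDominated f))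
    {p : ℝ[X]} (hp : ∀ x, 0 ≤ p.eval x) :
    Integrable (fun x => p.eval x) ν := by
  have hbound (N : ℕ) :
      ∫⁻ x, ‖truncatePoly p N x‖ₑ ∂ν ≤ ENNReal.ofReal (g (polyToDominated p)) := by
    have hnonneg (x : ℝ) : 0 ≤ truncatePoly p N x := mul_nonneg (hp x) (le_max_left _ _)
    rw [← ofReal_integral_norm_eq_lintegral_enorm (truncatePoly p N).integrable]
    simp only [Real.norm_of_nonneg (hnonneg _), hν]
    refine ENNReal.ofReal_le_ofReal (OrderHomClass.mono g fun x => ?_)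
    exact (le_abs_self _).trans ((abs_truncatePoly_le p N x).trans_eq (abs_of_nonneg (hp x)))
  refine integrable_of_tendsto (ae_of_all _ (tendsto_truncatePoly p))
    (fun N => (truncatePoly p N).continuous.aestronglyMeasurable) (ne_top_of_le_ne_top
      (ENNReal.ofReal_ne_top (r := g (polyToDominated p))) ?_)
  exact liminf_le_of_frequently_le' (Frequently.of_forall hbound)

lemma integrable_eval
    (hν : ∀ f : C_c(ℝ, ℝ), ∫ x, f x ∂ν = g (compactlySupportedToDominated f))
    (p : ℝ[X]) : Integrable (fun x => p.eval x) ν := by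
  have hdom : Integrable (fun x => (1 + p ^ 2).eval x) ν :=
    integrable_eval_of_nonneg hν fun x => by simp only [eval_add, eval_one, eval_pow]; positivity
  exact hdom.mono' p.continuous.aestronglyMeasurable
    (ae_of_all _ fun x => by simpa using abs_le_one_add_sq (p.eval x))

lemma integral_eval_eq
    (hν : ∀ f : C_c(ℝ, ℝ), ∫ x, f x ∂ν = g (compactlySupportedToDominated f))
    (p : ℝ[X]) : ∫ x, p.eval x ∂ν = g (polyToDominated p) := by
  have hdominated : Tendsto (fun N => ∫ x, truncatePoly p N x ∂ν) atTop (𝓝 (∫ x, p.eval x ∂ν)) :=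
    tendsto_integral_of_dominated_convergence _
      (fun N => (truncatePoly p N).continuous.aestronglyMeasurable) (integrable_eval hν p).norm
      (fun N => ae_of_all _ (abs_truncatePoly_le p N)) (ae_of_all _ (tendsto_truncatePoly p))
  refine tendsto_nhds_unique hdominated ?_
  let r : polyDominated := polyToDominated (X ^ 2 * (1 + p ^ 2))
  have hle (N : ℕ) (x : ℝ) : |truncatePoly p N x - p.eval x| ≤
      ((N + 1 : ℝ)⁻¹ • r).1 x := by
    refine (abs_truncatePoly_sub_le p N x).trans ?_
    rw [div_eq_inv_mul]
    simp only [r, Submodule.coe_smul, Pi.smul_apply, smul_eq_mul, polyToDominated_apply, eval_mul,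
      eval_pow, eval_X, eval_add, eval_one]
    gcongr
    exact abs_le_one_add_sq _
  rw [tendsto_iff_norm_sub_tendsto_zero]
  refine squeeze_zero (fun _ => norm_nonneg _) (fun N => ?_) (tendsto_const_div_add_one (g r))
  rw [hν, ← map_sub, div_eq_inv_mul, ← smul_eq_mul, ← map_smul, Real.norm_eq_abs, abs_le, ← map_neg]
  exact ⟨OrderHomClass.mono g fun x => (abs_le.mp (hle N x)).1,
    OrderHomClass.mono g fun x => (abs_le.mp (hle N x)).2⟩

end Representation

theorem exists_measure_integral_eval_eq {L : ℝ[X] →ₗ[ℝ] ℝ}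
    (hL : ∀ p : ℝ[X], (∀ x, 0 ≤ p.eval x) → 0 ≤ L p) :
    ∃ ν : Measure ℝ, HasAllMoments ν ∧ ∀ p : ℝ[X], ∫ x, p.eval x ∂ν = L p := by
  obtain ⟨g, hg⟩ := exists_positive_extension_to_polyDominated hL
  let Λ : C_c(ℝ, ℝ) →ₚ[ℝ] ℝ := PositiveLinearMap.mk₀
    (g.toLinearMap ∘ₗ compactlySupportedToDominated) fun f hf => map_nonneg g fun x => hf x
  have hν := RealRMK.integral_rieszMeasure Λ
  refine ⟨RealRMK.rieszMeasure Λ, fun n => ?_, fun p => (integral_eval_eq hν p).trans (hg p)⟩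
  simpa using (integrable_eval hν (X ^ n)).norm

/-! ### Annihilators of the polynomials and their Cauchy transforms -/

section Annihilators

lemma HasAllMoments.isFiniteMeasure {ν : Measure ℝ} (hν : HasAllMoments ν) : IsFiniteMeasure ν :=
  (integrable_const_iff_isFiniteMeasure (one_ne_zero (α := ℝ))).mp (by simpa using hν 0)

lemma continuous_eval_ofReal (p : ℂ[X]) : Continuous fun x : ℝ => p.eval (x : ℂ) :=
  p.continuous.comp Complex.continuous_ofReal

lemma HasAllMoments.memLp_eval {ν : Measure ℝ} (hν : HasAllMoments ν) (p : ℂ[X]) :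
    MemLp (fun x : ℝ => p.eval (x : ℂ)) 2 ν := by
  induction p using Polynomial.induction_on' with
  | add p q hp hq => simp only [eval_add]; exact hp.add hq
  | monomial n a =>
    rw [memLp_two_iff_integrable_sq_norm (continuous_eval_ofReal _).aestronglyMeasurable]
    refine ((hν (n * 2)).const_mul (‖a‖ ^ 2)).congr (ae_of_all _ fun x => ?_)
    simp only [eval_monomial, norm_mul, norm_pow, Complex.norm_real, Real.norm_eq_abs, mul_pow,
      pow_mul]

lemma HasAllMoments.integrable_sq_norm_eval {ν : Measure ℝ} (hν : HasAllMoments ν) (p : ℂ[X]) :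
    Integrable (fun x : ℝ => ‖p.eval (x : ℂ)‖ ^ 2) ν :=
  (hν.memLp_eval p).integrable_norm_pow two_ne_zero

lemma HasAllMoments.integrable_eval {ν : Measure ℝ} (hν : HasAllMoments ν) (p : ℝ[X]) :
    Integrable (fun x => p.eval x) ν := by
  induction p using Polynomial.induction_on' with
  | add p q hp hq => simp only [eval_add]; exact hp.add hq
  | monomial n a =>
    refine ((hν n).const_mul ‖a‖).mono' (Polynomial.continuous _).aestronglyMeasurable
      (ae_of_all _ fun x => ?_)
    simp

lemma eval_map_conj (p : ℂ[X]) (x : ℝ) :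
    (p.map (starRingEnd ℂ)).eval (x : ℂ) = starRingEnd ℂ (p.eval (x : ℂ)) := by
  simpa only [Complex.conj_ofReal] using eval_map_apply (p := p) (f := starRingEnd ℂ) (x : ℂ)

/-- The classes of polynomials in `L²(ν)`. -/
def polySubmodule (ν : Measure ℝ) : Submodule ℂ (Lp ℂ 2 ν) where
  carrier := {f | ∃ p : ℂ[X], f =ᵐ[ν] fun x : ℝ => p.eval (x : ℂ)}
  add_mem' := by
    rintro f g ⟨p, hp⟩ ⟨q, hq⟩
    refine ⟨p + q, ?_⟩
    filter_upwards [hp, hq, Lp.coeFn_add f g] with x hpx hqx hadd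
    rw [hadd, Pi.add_apply, hpx, hqx, eval_add]
  zero_mem' := ⟨0, by simp only [eval_zero]; exact Lp.coeFn_zero ℂ 2 ν⟩
  smul_mem' := by
    rintro c f ⟨p, hp⟩
    refine ⟨C c * p, ?_⟩
    filter_upwards [hp, Lp.coeFn_smul c f] with x hpx hsmul
    rw [hsmul, Pi.smul_apply, hpx, eval_mul, eval_C, smul_eq_mul]

/-- `h ∈ L²(ν)` annihilates the polynomials under the bilinear pairing `∫ p h dν`, that is, the
conjugate of `h` is orthogonal to them. -/
structure IsPolyAnnihilator (ν : Measure ℝ) (h : ℝ → ℂ) : Prop where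
  memLp : MemLp h 2 ν
  integral_eq_zero (p : ℂ[X]) : ∫ x : ℝ, p.eval (x : ℂ) * h x ∂ν = 0

variable {ν : Measure ℝ} {g h : ℝ → ℂ}

lemma exists_isPolyAnnihilator_of_not_polyDense (hν : HasAllMoments ν) (hd : ¬ PolyDense ν) :
    ∃ h, IsPolyAnnihilator ν h ∧ ¬ h =ᵐ[ν] 0 := by
  have hproper : (polySubmodule ν)ᗮ ≠ ⊥ := fun h =>
    hd (Submodule.dense_iff_topologicalClosure_eq_top.mpr
      (Submodule.topologicalClosure_eq_top_iff.mpr h))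
  obtain ⟨f, hf, hf0⟩ := Submodule.exists_mem_ne_zero_of_ne_bot hproper
  refine ⟨f, ⟨Lp.memLp f, fun p => ?_⟩, fun h => hf0 (Lp.eq_zero_iff_ae_eq_zero.mpr h)⟩
  have hp := hν.memLp_eval (p.map (starRingEnd ℂ))
  have horth := (Submodule.mem_orthogonal _ _).mp hf (hp.toLp _) ⟨_, hp.coeFn_toLp⟩
  rw [L2.inner_def] at horth
  rw [← horth]
  refine integral_congr_ae ?_
  filter_upwards [hp.coeFn_toLp] with x hx
  rw [hx, RCLike.inner_apply, eval_map_conj, Complex.conj_conj, mul_comm]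

lemma IsPolyAnnihilator.integrable_eval_mul (hν : HasAllMoments ν) (hh : IsPolyAnnihilator ν h)
    (p : ℂ[X]) : Integrable (fun x : ℝ => p.eval (x : ℂ) * h x) ν :=
  (hν.memLp_eval p).integrable_mul hh.memLp

lemma IsPolyAnnihilator.conj (hh : IsPolyAnnihilator ν h) :
    IsPolyAnnihilator ν fun x => starRingEnd ℂ (h x) where
  memLp := hh.memLp.star
  integral_eq_zero p := by
    simpa [← integral_conj, eval_map_conj] using
      congrArg (starRingEnd ℂ) (hh.integral_eq_zero (p.map (starRingEnd ℂ)))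

lemma IsPolyAnnihilator.add (hν : HasAllMoments ν) (hg : IsPolyAnnihilator ν g)
    (hh : IsPolyAnnihilator ν h) : IsPolyAnnihilator ν fun x => g x + h x where
  memLp := hg.memLp.add hh.memLp
  integral_eq_zero p := by
    simp only [mul_add]
    rw [integral_add (hg.integrable_eval_mul hν p) (hh.integrable_eval_mul hν p),
      hg.integral_eq_zero, hh.integral_eq_zero, add_zero]

lemma IsPolyAnnihilator.const_mul (hh : IsPolyAnnihilator ν h) (c : ℂ) :
    IsPolyAnnihilator ν fun x => c * h x where
  memLp := hh.memLp.const_mul c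
  integral_eq_zero p := by
    simp only [mul_left_comm _ c]
    rw [integral_const_mul, hh.integral_eq_zero, mul_zero]

end Annihilators

section SeparatingAlgebra

open BoundedContinuousFunction

variable {Ω : Type*} [TopologicalSpace Ω] [MeasurableSpace Ω] [BorelSpace Ω] {μ : Measure Ω}

lemma memLp_boundedContinuousFunction_mul (F : Ω →ᵇ ℂ) {h : Ω → ℂ} {p : ENNReal}
    (hh : MemLp h p μ) : MemLp (fun x => F x * h x) p μ :=
  hh.of_le_mul (c := ‖F‖) (F.continuous.aestronglyMeasurable.mul hh.1) (ae_of_all _ fun x => by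
    rw [norm_mul]
    gcongr
    exact F.norm_coe_le_norm x)

lemma integral_withDensity_ofReal_sub {f : Ω → ℝ} (hf : Integrable f μ) (F : Ω →ᵇ ℂ) :
    ∫ x, F x ∂μ.withDensity (fun x => ENNReal.ofReal (f x)) -
      ∫ x, F x ∂μ.withDensity (fun x => ENNReal.ofReal (-f x)) = ∫ x, F x * f x ∂μ := by
  have hint {u : Ω → ℝ} (hu : Integrable u μ) : Integrable (fun x => max (u x) 0 • F x) μ :=
    hu.pos_part.smul_bdd _ F.continuous.aestronglyMeasurable (ae_of_all _ F.norm_coe_le_norm)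
  have hdensity {u : Ω → ℝ} (hu : Integrable u μ) :
      ∫ x, F x ∂μ.withDensity (fun x => ENNReal.ofReal (u x)) = ∫ x, max (u x) 0 • F x ∂μ := by
    rw [integral_withDensity_eq_integral_toReal_smul₀ hu.aemeasurable.ennreal_ofReal
      (ae_of_all _ fun _ => ENNReal.ofReal_lt_top)]
    simp only [ENNReal.toReal_ofReal']
  rw [hdensity hf, hdensity hf.fun_neg, ← integral_sub (hint hf) (hint hf.fun_neg)]
  congr with x
  rw [← sub_smul, max_zero_sub_max_neg_zero_eq_self, Complex.real_smul, mul_comm]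

variable [PolishSpace Ω] {A : StarSubalgebra ℂ (Ω →ᵇ ℂ)}

lemma ae_eq_zero_of_forall_integral_mul_ofReal_eq_zero
    (hA : (A.map (toContinuousMapStarₐ ℂ)).SeparatesPoints) {f : Ω → ℝ} (hf : Integrable f μ)
    (hAf : ∀ F ∈ A, ∫ x, F x * f x ∂μ = 0) : f =ᵐ[μ] 0 := by
  have := isFiniteMeasure_withDensity_ofReal hf.2
  have := isFiniteMeasure_withDensity_ofReal hf.fun_neg.2
  have heq : μ.withDensity (fun x => ENNReal.ofReal (f x)) =
      μ.withDensity fun x => ENNReal.ofReal (-f x) :=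
    ext_of_forall_mem_subalgebra_integral_eq_of_polish hA fun F hF =>
      sub_eq_zero.mp ((integral_withDensity_ofReal_sub hf F).trans (hAf F hF))
  have hae := (withDensity_eq_iff hf.aemeasurable.ennreal_ofReal
    hf.fun_neg.aemeasurable.ennreal_ofReal hf.lintegral_lt_top.ne).mp heq
  filter_upwards [hae] with x hx
  have hmax : max (f x) 0 = max (-f x) 0 := by
    simpa only [ENNReal.toReal_ofReal'] using congrArg ENNReal.toReal hx
  rw [Pi.zero_apply, ← max_zero_sub_max_neg_zero_eq_self (f x), hmax, sub_self]

theorem ae_eq_zero_of_forall_integral_mul_eq_zero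
    (hA : (A.map (toContinuousMapStarₐ ℂ)).SeparatesPoints) {h : Ω → ℂ} (hh : Integrable h μ)
    (hAh : ∀ F ∈ A, ∫ x, F x * h x ∂μ = 0) : h =ᵐ[μ] 0 := by
  have hint (F : Ω →ᵇ ℂ) : Integrable (fun x => F x * h x) μ :=
    hh.bdd_mul F.continuous.aestronglyMeasurable (ae_of_all _ F.norm_coe_le_norm)
  have hint' (F : Ω →ᵇ ℂ) : Integrable (fun x => F x * starRingEnd ℂ (h x)) μ :=
    (Complex.conjLIE.integrable_comp_iff.mpr hh).bdd_mul F.continuous.aestronglyMeasurable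
      (ae_of_all _ F.norm_coe_le_norm)
  have hAconj (F : Ω →ᵇ ℂ) (hF : F ∈ A) : ∫ x, F x * starRingEnd ℂ (h x) ∂μ = 0 := by
    simpa [← integral_conj] using congrArg (starRingEnd ℂ) (hAh (star F) (star_mem hF))
  have hre : (fun x => (h x).re) =ᵐ[μ] 0 :=
    ae_eq_zero_of_forall_integral_mul_ofReal_eq_zero hA hh.re fun F hF => by
      simp only [Complex.re_eq_add_conj, mul_div_assoc', mul_add]
      rw [integral_div, integral_add (hint F) (hint' F), hAh F hF, hAconj F hF]
      simp
  have him : (fun x => (h x).im) =ᵐ[μ] 0 :=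
    ae_eq_zero_of_forall_integral_mul_ofReal_eq_zero hA hh.im fun F hF => by
      simp only [Complex.im_eq_sub_conj, mul_div_assoc', mul_sub]
      rw [integral_div, integral_sub (hint F) (hint' F), hAh F hF, hAconj F hF]
      simp
  filter_upwards [hre, him] with x hrex himx using Complex.ext hrex himx

end SeparatingAlgebra

section CauchyTransform

open BoundedContinuousFunction

variable {ν : Measure ℝ} {h : ℝ → ℂ} {z : ℂ}

lemma ofReal_sub_ne_zero (hz : z.im ≠ 0) (x : ℝ) : (x : ℂ) - z ≠ 0 :=
  fun hx => hz (by simpa using congrArg Complex.im hx)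

lemma norm_inv_ofReal_sub_le (hz : z.im ≠ 0) (x : ℝ) : ‖((x : ℂ) - z)⁻¹‖ ≤ |z.im|⁻¹ := by
  rw [norm_inv]
  gcongr
  simpa using Complex.abs_im_le_norm ((x : ℂ) - z)

/-- The function `x ↦ (x - z)⁻¹` on the real line, for non-real `z`. -/
def cauchyKernel (z : ℂ) (hz : z.im ≠ 0) : ℝ →ᵇ ℂ :=
  ofNormedAddCommGroup (fun x : ℝ => ((x : ℂ) - z)⁻¹)
    ((Complex.continuous_ofReal.sub continuous_const).inv₀ (ofReal_sub_ne_zero hz)) |z.im|⁻¹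
    (norm_inv_ofReal_sub_le hz)

lemma cauchyKernel_apply (hz : z.im ≠ 0) (x : ℝ) : cauchyKernel z hz x = ((x : ℂ) - z)⁻¹ := rfl

/-- The Cauchy transform `z ↦ ∫ h(x) / (x - z) dν(x)` of the complex measure `h ν`, considered for
non-real `z` only. -/
def cauchyTransform (ν : Measure ℝ) (h : ℝ → ℂ) (z : ℂ) : ℂ :=
  ∫ x : ℝ, ((x : ℂ) - z)⁻¹ * h x ∂ν

lemma IsPolyAnnihilator.integral_eval_mul_inv_sub (hν : HasAllMoments ν)
    (hh : IsPolyAnnihilator ν h) (hz : z.im ≠ 0) (p : ℂ[X]) :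
    ∫ x : ℝ, p.eval (x : ℂ) * (((x : ℂ) - z)⁻¹ * h x) ∂ν = p.eval z * cauchyTransform ν h z := by
  have := hν.isFiniteMeasure
  obtain ⟨q, hq⟩ := X_sub_C_dvd_sub_C_eval (p := p) (a := z)
  have hsplit (x : ℝ) : p.eval (x : ℂ) * (((x : ℂ) - z)⁻¹ * h x) =
      p.eval z * (((x : ℂ) - z)⁻¹ * h x) + q.eval (x : ℂ) * h x := by
    have hp : p.eval (x : ℂ) - p.eval z = ((x : ℂ) - z) * q.eval (x : ℂ) := by
      simpa using congrArg (eval (x : ℂ)) hq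
    rw [sub_eq_iff_eq_add.mp hp]
    field_simp [ofReal_sub_ne_zero hz x]
    ring
  have hint : Integrable (fun x : ℝ => ((x : ℂ) - z)⁻¹ * h x) ν :=
    (memLp_boundedContinuousFunction_mul (cauchyKernel z hz) hh.memLp).integrable one_le_two
  simp only [hsplit]
  rw [integral_add (hint.const_mul _) (hh.integrable_eval_mul hν q), integral_const_mul,
    hh.integral_eq_zero, add_zero, cauchyTransform]

/-- The bounded continuous functions mapping annihilators of the polynomials to annihilators. -/
def annihilatorMultipliers (hν : HasAllMoments ν) : StarSubalgebra ℂ (ℝ →ᵇ ℂ) where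
  carrier := {F | ∀ h, IsPolyAnnihilator ν h → IsPolyAnnihilator ν fun x => F x * h x}
  mul_mem' := fun {F G} hF hG h hh => by simpa [mul_assoc] using hF _ (hG h hh)
  add_mem' := fun {F G} hF hG h hh => by simpa [add_mul] using (hF h hh).add hν (hG h hh)
  algebraMap_mem' := fun c h hh => hh.const_mul c
  star_mem' := fun {F} hF h hh => by simpa using (hF _ hh.conj).conj

lemma separatesPoints_of_cauchyKernel_mem {A : StarSubalgebra ℂ (ℝ →ᵇ ℂ)} {hz : z.im ≠ 0}
    (hA : cauchyKernel z hz ∈ A) : (A.map (toContinuousMapStarₐ ℂ)).SeparatesPoints := by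
  intro x y hxy
  refine ⟨cauchyKernel z hz, ⟨toContinuousMapStarₐ ℂ (cauchyKernel z hz), ⟨_, hA, rfl⟩, rfl⟩, ?_⟩
  simpa only [cauchyKernel_apply, ne_eq, inv_inj, sub_left_inj, Complex.ofReal_inj] using hxy

theorem exists_cauchyTransform_ne_zero_of_not_polyDense (hν : HasAllMoments ν)
    (hd : ¬ PolyDense ν) (hz : z.im ≠ 0) :
    ∃ h, IsPolyAnnihilator ν h ∧ cauchyTransform ν h z ≠ 0 := by
  have := hν.isFiniteMeasure
  by_contra! hvanish
  have hmem : cauchyKernel z hz ∈ annihilatorMultipliers hν := fun h hh =>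
    ⟨memLp_boundedContinuousFunction_mul _ hh.memLp, fun p =>
      (hh.integral_eval_mul_inv_sub hν hz p).trans (by rw [hvanish h hh, mul_zero])⟩
  obtain ⟨h, hh, hne⟩ := exists_isPolyAnnihilator_of_not_polyDense hν hd
  refine hne (ae_eq_zero_of_forall_integral_mul_eq_zero (separatesPoints_of_cauchyKernel_mem hmem)
    (hh.memLp.integrable one_le_two) fun F hF => ?_)
  simpa using (hF h hh).integral_eq_zero 1

lemma continuous_cauchyTransform_ofReal_add (hh : Integrable h ν) (hz : z.im ≠ 0) :
    Continuous fun t : ℝ => cauchyTransform ν h (t + z) := by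
  have him (t : ℝ) : (t + z : ℂ).im ≠ 0 := by simpa using hz
  refine continuous_of_dominated (bound := fun x => |z.im|⁻¹ * ‖h x‖)
    (fun t => (cauchyKernel _ (him t)).continuous.aestronglyMeasurable.mul hh.1)
    (fun t => ae_of_all _ fun x => ?_) (hh.norm.const_mul _) (ae_of_all _ fun x => ?_)
  · rw [norm_mul]
    gcongr
    simpa using norm_inv_ofReal_sub_le (him t) x
  · exact ((by fun_prop : Continuous fun t : ℝ => (x : ℂ) - (t + z)).inv₀
      fun t => ofReal_sub_ne_zero (him t) x).mul continuous_const

lemma sq_norm_integral_mul_le {Ω : Type*} [MeasurableSpace Ω] {μ : Measure Ω} {f g : Ω → ℂ}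
    (hf : MemLp f 2 μ) (hg : MemLp g 2 μ) :
    ‖∫ x, f x * g x ∂μ‖ ^ 2 ≤ (∫ x, ‖f x‖ ^ 2 ∂μ) * ∫ x, ‖g x‖ ^ 2 ∂μ := by
  have hholder : ‖∫ x, f x * g x ∂μ‖ ≤ √(∫ x, ‖f x‖ ^ 2 ∂μ) * √(∫ x, ‖g x‖ ^ 2 ∂μ) := by
    refine (norm_integral_le_integral_norm _).trans ?_
    simpa only [norm_mul, Real.rpow_two, ← Real.sqrt_eq_rpow] using
      integral_mul_norm_le_Lp_mul_Lq Real.HolderConjugate.two_two (by simpa using hf)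
        (by simpa using hg)
  calc ‖∫ x, f x * g x ∂μ‖ ^ 2 ≤ (√(∫ x, ‖f x‖ ^ 2 ∂μ) * √(∫ x, ‖g x‖ ^ 2 ∂μ)) ^ 2 := by gcongr
    _ = (∫ x, ‖f x‖ ^ 2 ∂μ) * ∫ x, ‖g x‖ ^ 2 ∂μ := by
      rw [mul_pow, Real.sq_sqrt (integral_nonneg fun _ => by positivity),
        Real.sq_sqrt (integral_nonneg fun _ => by positivity)]

lemma IsPolyAnnihilator.sq_norm_eval_mul_cauchyTransform_le (hν : HasAllMoments ν)
    (hh : IsPolyAnnihilator ν h) (hz : z.im ≠ 0) (p : ℂ[X]) :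
    ‖p.eval z * cauchyTransform ν h z‖ ^ 2 ≤
      (∫ x : ℝ, ‖p.eval (x : ℂ)‖ ^ 2 ∂ν) * ∫ x : ℝ, ‖((x : ℂ) - z)⁻¹ * h x‖ ^ 2 ∂ν := by
  rw [← hh.integral_eval_mul_inv_sub hν hz]
  exact sq_norm_integral_mul_le (hν.memLp_eval p)
    (memLp_boundedContinuousFunction_mul (cauchyKernel z hz) hh.memLp)

lemma integral_sq_norm_inv_sub_mul_le (hh : MemLp h 2 ν) (hz : z.im ≠ 0) :
    ∫ x : ℝ, ‖((x : ℂ) - z)⁻¹ * h x‖ ^ 2 ∂ν ≤ |z.im|⁻¹ ^ 2 * ∫ x, ‖h x‖ ^ 2 ∂ν := by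
  rw [← integral_const_mul]
  have hmem := memLp_boundedContinuousFunction_mul (cauchyKernel z hz) hh
  refine integral_mono (hmem.integrable_norm_pow two_ne_zero)
    ((hh.integrable_norm_pow two_ne_zero).const_mul _) fun x => ?_
  simp only [norm_mul, mul_pow]
  gcongr
  exact norm_inv_ofReal_sub_le hz x

end CauchyTransform

/-- Evaluation of polynomials in the `L²(ν)` norm is bounded, uniformly at all points of a
neighborhood of `a`. -/
def PolyEvalBoundedNear (ν : Measure ℝ) (a : ℝ) : Prop :=
  ∃ c : ℝ, ∀ᶠ t : ℝ in 𝓝 a, ∀ p : ℂ[X],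
    ‖p.eval (t : ℂ)‖ ^ 2 ≤ c * ∫ x : ℝ, ‖p.eval (x : ℂ)‖ ^ 2 ∂ν

theorem polyEvalBoundedNear_of_not_polyDense {ν : Measure ℝ} (hν : HasAllMoments ν)
    (hd : ¬ PolyDense ν) (a : ℝ) : PolyEvalBoundedNear ν a := by
  have := hν.isFiniteMeasure
  have him (t : ℝ) : (t + Complex.I : ℂ).im = 1 := by simp
  obtain ⟨h, hh, hne⟩ := exists_cauchyTransform_ne_zero_of_not_polyDense hν hd
    ((him a).trans_ne one_ne_zero)
  obtain ⟨ε, hε, hlt⟩ := exists_between (norm_pos_iff.mpr hne)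
  have hcont := continuous_cauchyTransform_ofReal_add (z := Complex.I)
    (hh.memLp.integrable one_le_two) (by simp)
  refine ⟨(∫ x, ‖h x‖ ^ 2 ∂ν) / ε ^ 2, ?_⟩
  filter_upwards [hcont.norm.continuousAt.eventually (lt_mem_nhds hlt)] with t ht p
  have hz : (t + Complex.I : ℂ).im ≠ 0 := (him t).trans_ne one_ne_zero
  have heval : ‖p.eval (t : ℂ)‖ ≤ ‖(reflectRoots p).eval (t + Complex.I)‖ := by
    simpa using norm_eval_ofReal_le_norm_eval_reflectRoots p (z := t + Complex.I) (by simp)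
  rw [div_mul_eq_mul_div, le_div_iff₀ (by positivity), ← mul_pow]
  calc (‖p.eval (t : ℂ)‖ * ε) ^ 2
      ≤ ‖(reflectRoots p).eval (t + Complex.I) * cauchyTransform ν h (t + Complex.I)‖ ^ 2 := by
        rw [norm_mul]
        gcongr
    _ ≤ _ := hh.sq_norm_eval_mul_cauchyTransform_le hν hz _
    _ ≤ (∫ x : ℝ, ‖(reflectRoots p).eval (x : ℂ)‖ ^ 2 ∂ν) *
        (|(t + Complex.I : ℂ).im|⁻¹ ^ 2 * ∫ x, ‖h x‖ ^ 2 ∂ν) := by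
        gcongr
        exact integral_sq_norm_inv_sub_mul_le hh.memLp hz
    _ = (∫ x, ‖h x‖ ^ 2 ∂ν) * ∫ x : ℝ, ‖p.eval (x : ℂ)‖ ^ 2 ∂ν := by
        simp only [norm_eval_reflectRoots_ofReal, him, abs_one, inv_one, one_pow, one_mul, mul_comm]

/-! ### Removing the weight -/

section EvaluationBounds

variable {μ ν : Measure ℝ} {a : ℝ}

lemma HasAllMoments.mono (hμ : HasAllMoments μ) (hle : ν ≤ μ) : HasAllMoments ν :=
  fun n => (hμ n).mono_measure hle

lemma HasAllMoments.smul (hμ : HasAllMoments μ) (K : NNReal) : HasAllMoments (K • μ) :=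
  fun n => (hμ n).smul_measure_nnreal

lemma HasAllMoments.withDensity_one_add_sq_pow (hμ : HasAllMoments μ) (n : ℕ) :
    HasAllMoments (μ.withDensity fun x => ENNReal.ofReal ((1 + x ^ 2) ^ n)) := by
  intro m
  rw [integrable_withDensity_iff (by fun_prop) (ae_of_all _ fun _ => ENNReal.ofReal_lt_top)]
  refine (hμ.integrable_eval (X ^ m * (1 + X ^ 2) ^ n)).norm.congr (ae_of_all _ fun x => ?_)
  have hnonneg : 0 ≤ 1 + x ^ 2 := by positivity
  simp [abs_of_nonneg hnonneg, ENNReal.toReal_ofReal (pow_nonneg hnonneg n)]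

lemma PolyEvalBoundedNear.exists_pos (h : PolyEvalBoundedNear ν a) :
    ∃ c > 0, ∀ᶠ t : ℝ in 𝓝 a, ∀ p : ℂ[X],
      ‖p.eval (t : ℂ)‖ ^ 2 ≤ c * ∫ x : ℝ, ‖p.eval (x : ℂ)‖ ^ 2 ∂ν := by
  obtain ⟨c, hc⟩ := h
  refine ⟨max c 1, by positivity, hc.mono fun t ht p => (ht p).trans ?_⟩
  gcongr
  exact le_max_left c 1

lemma PolyEvalBoundedNear.of_le_smul {K : NNReal} (hμ : HasAllMoments μ) (hle : ν ≤ K • μ)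
    (h : PolyEvalBoundedNear ν a) : PolyEvalBoundedNear μ a := by
  obtain ⟨c, hc, hbound⟩ := h.exists_pos
  refine ⟨c * K, hbound.mono fun t ht p => (ht p).trans ?_⟩
  rw [mul_assoc]
  gcongr
  refine (integral_mono_measure hle (ae_of_all _ fun x => by positivity)
    ((hμ.smul K).integrable_sq_norm_eval p)).trans_eq ?_
  exact integral_smul_nnreal_measure _ K

lemma exists_closedBall_measureReal_lt [IsFiniteMeasure ν] (hmass : ν {a} = 0) {r ε : ℝ}
    (hr : 0 < r) (hε : 0 < ε) : ∃ δ, 0 < δ ∧ δ < r ∧ ν.real (Metric.closedBall a δ) < ε := by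
  have hlim := tendsto_measure_Icc_nhdsWithin_right' ν a
  rw [hmass] at hlim
  obtain ⟨δ, hlt, hδ, hδr⟩ := ((hlim.eventually_lt_const (ENNReal.ofReal_pos.mpr hε)).and
    (Ioo_mem_nhdsGT hr)).exists
  refine ⟨δ, hδ, hδr, ?_⟩
  rw [Real.closedBall_eq_Icc]
  exact (ENNReal.lt_ofReal_iff_toReal_lt (measure_ne_top _ _)).mp hlt

theorem PolyEvalBoundedNear.exists_restrict_compl_closedBall (hν : HasAllMoments ν)
    (hmass : ν {a} = 0) (h : PolyEvalBoundedNear ν a) :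
    ∃ δ > 0, PolyEvalBoundedNear (ν.restrict (Metric.closedBall a δ)ᶜ) a := by
  have := hν.isFiniteMeasure
  obtain ⟨c, hc, hbound⟩ := h.exists_pos
  obtain ⟨r, hr, hball⟩ := Metric.nhds_basis_closedBall.eventually_iff.mp hbound
  obtain ⟨δ, hδ, hδr, hsmall⟩ := exists_closedBall_measureReal_lt hmass hr
    (by positivity : 0 < (2 * c)⁻¹)
  refine ⟨δ, hδ, 2 * c, ?_⟩
  filter_upwards [Metric.closedBall_mem_nhds a hr] with t ht p
  obtain ⟨t₀, ht₀, hmax⟩ := (isCompact_closedBall a r).exists_isMaxOn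
    (f := fun x : ℝ => ‖p.eval (x : ℂ)‖ ^ 2) ⟨t, ht⟩
    ((continuous_eval_ofReal p).norm.pow 2).continuousOn
  rw [isMaxOn_iff] at hmax
  have hinner : ∫ x in Metric.closedBall a δ, ‖p.eval (x : ℂ)‖ ^ 2 ∂ν ≤
      ‖p.eval (t₀ : ℂ)‖ ^ 2 * (2 * c)⁻¹ := by
    have hconst := norm_setIntegral_le_of_norm_le_const (measure_lt_top ν (Metric.closedBall a δ))
      fun x hx => (Real.norm_of_nonneg (sq_nonneg ‖p.eval (x : ℂ)‖)).trans_le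
        (hmax x (Metric.closedBall_subset_closedBall hδr.le hx))
    exact (le_abs_self _).trans (hconst.trans (by gcongr))
  have hmax_le : ‖p.eval (t₀ : ℂ)‖ ^ 2 ≤ ‖p.eval (t₀ : ℂ)‖ ^ 2 / 2 +
      c * ∫ x in (Metric.closedBall a δ)ᶜ, ‖p.eval (x : ℂ)‖ ^ 2 ∂ν :=
    calc ‖p.eval (t₀ : ℂ)‖ ^ 2 ≤ c * ∫ x : ℝ, ‖p.eval (x : ℂ)‖ ^ 2 ∂ν := hball ht₀ p
      _ = c * (∫ x in Metric.closedBall a δ, ‖p.eval (x : ℂ)‖ ^ 2 ∂ν) +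
          c * ∫ x in (Metric.closedBall a δ)ᶜ, ‖p.eval (x : ℂ)‖ ^ 2 ∂ν := by
        rw [← mul_add, integral_add_compl Metric.isClosed_closedBall.measurableSet
          (hν.integrable_sq_norm_eval p)]
      _ ≤ c * (‖p.eval (t₀ : ℂ)‖ ^ 2 * (2 * c)⁻¹) + _ := by gcongr
      _ = _ := by field_simp
  linarith [hmax t ht]

lemma exists_mem_sq_norm_eval_le (hμ : HasAllMoments μ) {s : Set ℝ} (hs : μ s ≠ 0) (p : ℂ[X]) :
    ∃ y ∈ s, ‖p.eval (y : ℂ)‖ ^ 2 ≤ (μ.real s)⁻¹ * ∫ x : ℝ, ‖p.eval (x : ℂ)‖ ^ 2 ∂μ := by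
  have := hμ.isFiniteMeasure
  have hint := hμ.integrable_sq_norm_eval p
  obtain ⟨y, hy, hle⟩ := exists_le_setAverage hs (measure_ne_top _ _) hint.integrableOn
  refine ⟨y, hy, hle.trans ?_⟩
  rw [setAverage_eq, smul_eq_mul]
  gcongr
  · exact ae_of_all _ fun x => by positivity
  · exact Measure.restrict_le_self

lemma one_add_sq_le_mul_sub_sq {x y δ : ℝ} (hδ : 0 < δ) (hx : δ ≤ |x - a|)
    (hy : |y - a| ≤ δ / 2) :
    1 + x ^ 2 ≤ 4 * ((1 + 2 * a ^ 2) / δ ^ 2 + 2) * (x - y) ^ 2 := by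
  have hdist : |x - a| ≤ 2 * |x - y| := by linarith [abs_sub_le x y a]
  have hsq : (x - a) ^ 2 ≤ 4 * (x - y) ^ 2 := by
    nlinarith [sq_abs (x - a), sq_abs (x - y), abs_nonneg (x - a)]
  have hone : 1 ≤ (x - a) ^ 2 / δ ^ 2 := by
    rw [one_le_div (by positivity), ← sq_abs (x - a)]
    gcongr
  calc 1 + x ^ 2 ≤ (1 + 2 * a ^ 2) * 1 + 2 * (x - a) ^ 2 := by nlinarith [sq_nonneg (x - 2 * a)]
    _ ≤ (1 + 2 * a ^ 2) * ((x - a) ^ 2 / δ ^ 2) + 2 * (x - a) ^ 2 := by gcongr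
    _ = ((1 + 2 * a ^ 2) / δ ^ 2 + 2) * (x - a) ^ 2 := by ring
    _ ≤ ((1 + 2 * a ^ 2) / δ ^ 2 + 2) * (4 * (x - y) ^ 2) := by gcongr
    _ = _ := by ring

lemma norm_add_sq_le_two_mul (u v : ℂ) : ‖u + v‖ ^ 2 ≤ 2 * (‖u‖ ^ 2 + ‖v‖ ^ 2) :=
  (pow_le_pow_left₀ (norm_nonneg _) (norm_add_le u v) 2).trans add_sq_le

lemma integral_sq_norm_eval_sub_const_le (hμ : HasAllMoments μ) (p : ℂ[X]) (b : ℂ) :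
    ∫ x : ℝ, ‖(p - C b).eval (x : ℂ)‖ ^ 2 ∂μ ≤
      2 * ((∫ x : ℝ, ‖p.eval (x : ℂ)‖ ^ 2 ∂μ) + μ.real Set.univ * ‖b‖ ^ 2) := by
  have := hμ.isFiniteMeasure
  have hint := hμ.integrable_sq_norm_eval p
  rw [← smul_eq_mul (μ.real Set.univ), ← integral_const, ← integral_add hint (integrable_const _),
    ← integral_const_mul]
  refine integral_mono (hμ.integrable_sq_norm_eval _)
    ((hint.add (integrable_const _)).const_mul 2) fun x => ?_
  simpa [sub_eq_add_neg] using norm_add_sq_le_two_mul (p.eval (x : ℂ)) (-b)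

lemma setIntegral_sq_norm_eval_withDensity_le (hμ : HasAllMoments μ) {y δ : ℝ} (hδ : 0 < δ)
    (hy : y ∈ Metric.closedBall a (δ / 2)) (q : ℂ[X]) :
    ∫ x in (Metric.closedBall a δ)ᶜ, ‖q.eval (x : ℂ)‖ ^ 2
        ∂μ.withDensity (fun x => ENNReal.ofReal (1 + x ^ 2)) ≤
      4 * ((1 + 2 * a ^ 2) / δ ^ 2 + 2) *
        ∫ x : ℝ, ‖((X - C (y : ℂ)) * q).eval (x : ℂ)‖ ^ 2 ∂μ := by
  have hint := hμ.integrable_sq_norm_eval ((X - C (y : ℂ)) * q)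
  rw [setIntegral_withDensity_eq_setIntegral_toReal_smul (by fun_prop)
    (ae_of_all _ fun _ => ENNReal.ofReal_lt_top) _ Metric.isClosed_closedBall.measurableSet.compl,
    ← integral_const_mul]
  refine (integral_mono_of_nonneg (ae_of_all _ fun x => by positivity)
    (hint.const_mul _).integrableOn ((ae_restrict_iff'
      Metric.isClosed_closedBall.measurableSet.compl).mpr (ae_of_all _ fun x hx => ?_))).trans
    (setIntegral_le_integral (hint.const_mul _) (ae_of_all _ fun x => by positivity))
  rw [Set.mem_compl_iff, Metric.mem_closedBall, not_le, Real.dist_eq] at hx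
  have hnorm : ‖((x : ℂ) - y)‖ ^ 2 = (x - y) ^ 2 := by simp [norm_ofReal_sub_sq]
  simp only [ENNReal.toReal_ofReal (by positivity : 0 ≤ 1 + x ^ 2), smul_eq_mul, eval_mul, eval_sub,
    eval_X, eval_C, norm_mul, mul_pow, hnorm, ← mul_assoc]
  gcongr
  exact one_add_sq_le_mul_sub_sq hδ hx.le hy

theorem PolyEvalBoundedNear.of_restrict_withDensity_one_add_sq (hμ : HasAllMoments μ)
    (ha : a ∈ mSupp μ) {δ : ℝ} (hδ : 0 < δ)
    (h : PolyEvalBoundedNear ((μ.withDensity fun x => ENNReal.ofReal (1 + x ^ 2)).restrict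
      (Metric.closedBall a δ)ᶜ) a) : PolyEvalBoundedNear μ a := by
  obtain ⟨c, hc, hbound⟩ := h.exists_pos
  have hball : Metric.closedBall a (δ / 2) ∈ 𝓝 a := Metric.closedBall_mem_nhds a (half_pos hδ)
  set K := 4 * ((1 + 2 * a ^ 2) / δ ^ 2 + 2)
  set m := (μ.real (Metric.closedBall a (δ / 2)))⁻¹
  refine ⟨2 * (m + δ ^ 2 * (c * (K * (2 * (1 + μ.real Set.univ * m))))), ?_⟩
  filter_upwards [hbound, hball] with t ht htball p
  obtain ⟨y, hy, hpy⟩ := exists_mem_sq_norm_eval_le hμ (ha _ hball) p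
  obtain ⟨q, hq⟩ := X_sub_C_dvd_sub_C_eval (p := p) (a := (y : ℂ))
  set N := ∫ x : ℝ, ‖p.eval (x : ℂ)‖ ^ 2 ∂μ
  have hqt : ‖q.eval (t : ℂ)‖ ^ 2 ≤ c * (K * (2 * (N + μ.real Set.univ * (m * N)))) := by
    refine (ht q).trans ?_
    gcongr
    refine (setIntegral_sq_norm_eval_withDensity_le hμ hδ hy q).trans ?_
    rw [← hq]
    gcongr
    refine (integral_sq_norm_eval_sub_const_le hμ p _).trans ?_
    gcongr
  have hty : ‖(t : ℂ) - y‖ ≤ δ := by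
    rw [← Complex.ofReal_sub, Complex.norm_real, ← dist_eq_norm]
    linarith [dist_triangle_right t y a, Metric.mem_closedBall.mp htball,
      Metric.mem_closedBall.mp hy]
  have hpt : p.eval (t : ℂ) = p.eval (y : ℂ) + ((t : ℂ) - y) * q.eval (t : ℂ) := by
    have := congrArg (eval (t : ℂ)) hq
    simp only [eval_sub, eval_C, eval_mul, eval_X] at this
    linear_combination this
  calc ‖p.eval (t : ℂ)‖ ^ 2
      ≤ 2 * (‖p.eval (y : ℂ)‖ ^ 2 + ‖(t : ℂ) - y‖ ^ 2 * ‖q.eval (t : ℂ)‖ ^ 2) := by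
        rw [hpt, ← mul_pow, ← norm_mul]
        exact norm_add_sq_le_two_mul _ _
    _ ≤ 2 * (m * N + δ ^ 2 * (c * (K * (2 * (N + μ.real Set.univ * (m * N)))))) := by gcongr
    _ = _ := by ring

theorem PolyEvalBoundedNear.of_withDensity_one_add_sq_pow (hμ : HasAllMoments μ)
    (ha : a ∈ mSupp μ) (hmass : μ {a} = 0) {n : ℕ}
    (h : PolyEvalBoundedNear (μ.withDensity fun x => ENNReal.ofReal ((1 + x ^ 2) ^ n)) a) :
    PolyEvalBoundedNear μ a := by
  induction n generalizing μ with
  | zero => simpa [← Pi.one_def, withDensity_one] using h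
  | succ n ih =>
    set W : ℝ → ENNReal := fun x => ENNReal.ofReal (1 + x ^ 2)
    have hW : Measurable W := by fun_prop
    have hWne (x : ℝ) : W x ≠ 0 := (ENNReal.ofReal_pos.mpr (by positivity)).ne'
    have hμW : HasAllMoments (μ.withDensity W) := by simpa using hμ.withDensity_one_add_sq_pow 1
    have hsupp : a ∈ mSupp (μ.withDensity W) := fun U hU hzero =>
      ha U hU (withDensity_absolutelyContinuous' hW.aemeasurable (ae_of_all _ hWne) hzero)
    have hmassW : (μ.withDensity W) {a} = 0 := withDensity_absolutelyContinuous μ W hmass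
    have hsplit : (μ.withDensity fun x => ENNReal.ofReal ((1 + x ^ 2) ^ (n + 1))) =
        (μ.withDensity W).withDensity fun x => ENNReal.ofReal ((1 + x ^ 2) ^ n) := by
      rw [← withDensity_mul _ hW (by fun_prop)]
      congr with x
      rw [Pi.mul_apply, ← ENNReal.ofReal_mul (by positivity), pow_succ']
    rw [hsplit] at h
    obtain ⟨δ, hδ, hrestrict⟩ := (ih hμW hsupp hmassW h).exists_restrict_compl_closedBall hμW hmassW
    exact hrestrict.of_restrict_withDensity_one_add_sq hμ ha hδ

end EvaluationBounds

/-! ### Indeterminacy -/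

/-- The functional `p ↦ ∫ p dμ - ε p(a)`: a measure representing it, with the mass `ε` added at `a`,
has the moments of `μ`. -/
def integralSubEval {μ : Measure ℝ} (hμ : HasAllMoments μ) (a ε : ℝ) : ℝ[X] →ₗ[ℝ] ℝ where
  toFun p := ∫ x, p.eval x ∂μ - ε * p.eval a
  map_add' p q := by
    simp only [eval_add]
    rw [integral_add (hμ.integrable_eval p) (hμ.integrable_eval q)]
    ring
  map_smul' c p := by
    simp only [eval_smul, smul_eq_mul, integral_const_mul, RingHom.id_apply]
    ring

lemma integralSubEval_nonneg {μ : Measure ℝ} (hμ : HasAllMoments μ) {a c : ℝ} (hc : 0 < c)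
    (hbound : ∀ p : ℂ[X], ‖p.eval (a : ℂ)‖ ^ 2 ≤ c * ∫ x : ℝ, ‖p.eval (x : ℂ)‖ ^ 2 ∂μ)
    {p : ℝ[X]} (hp : ∀ x, 0 ≤ p.eval x) : 0 ≤ integralSubEval hμ a c⁻¹ p := by
  obtain ⟨s, hs⟩ := exists_norm_eval_sq_eq_of_eval_nonneg p hp
  have hpa := hbound s
  simp only [hs] at hpa
  exact sub_nonneg.mpr ((inv_mul_le_iff₀ hc).mpr hpa)

lemma HasAllMoments.add_smul_dirac {ν : Measure ℝ} (hν : HasAllMoments ν) (a ε : ℝ) :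
    HasAllMoments (ν + ENNReal.ofReal ε • Measure.dirac a) := fun n =>
  (hν n).add_measure ((integrable_dirac (by simp)).smul_measure ENNReal.ofReal_ne_top)

lemma integral_eval_add_smul_dirac {ν : Measure ℝ} (hν : HasAllMoments ν) (a : ℝ) {ε : ℝ}
    (hε : 0 ≤ ε) (p : ℝ[X]) :
    ∫ x, p.eval x ∂(ν + ENNReal.ofReal ε • Measure.dirac a) =
      ∫ x, p.eval x ∂ν + ε * p.eval a := by
  rw [integral_add_measure (hν.integrable_eval p)
    ((integrable_dirac (by simp)).smul_measure ENNReal.ofReal_ne_top), integral_smul_measure,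
    integral_dirac, ENNReal.toReal_ofReal hε, smul_eq_mul]

theorem PolyEvalBoundedNear.not_isDeterminate {μ : Measure ℝ} {a : ℝ} (hμ : HasAllMoments μ)
    (hmass : μ {a} = 0) (h : PolyEvalBoundedNear μ a) : ¬ IsDeterminate μ := by
  intro hdet
  obtain ⟨c, hc, hbound⟩ := h.exists_pos
  obtain ⟨ν, hν, hνL⟩ := exists_measure_integral_eval_eq fun p hp =>
    integralSubEval_nonneg hμ hc hbound.self_of_nhds hp
  have hμν : ν + ENNReal.ofReal c⁻¹ • Measure.dirac a = μ :=
    hdet _ (hν.add_smul_dirac a c⁻¹) fun n => by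
      have hmoment := integral_eval_add_smul_dirac hν a (inv_nonneg.mpr hc.le) (X ^ n)
      rw [hνL] at hmoment
      simpa [integralSubEval] using hmoment
  rw [← hμν] at hmass
  simp [hc] at hmass

lemma ofReal_pow_le_ofReal_one_add_sq_pow (x : ℝ) (k : ℕ) :
    ENNReal.ofReal (x ^ k) ≤ ENNReal.ofReal ((1 + x ^ 2) ^ k) := by
  refine ENNReal.ofReal_le_ofReal ((le_abs_self _).trans ?_)
  rw [abs_pow]
  gcongr
  exact abs_le_one_add_sq x

theorem stmt3_general {μ : Measure ℝ} (hmom : HasAllMoments μ) (hdet : IsDeterminate μ) {a : ℝ}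
    (ha : a ∈ mSupp μ) (hmass : μ {a} = 0) {w : ℝ → ENNReal} {K : NNReal} {n : ℕ}
    (hw : ∀ᵐ x ∂μ, w x ≤ K * ENNReal.ofReal ((1 + x ^ 2) ^ n)) : PolyDense (μ.withDensity w) := by
  by_contra hd
  let μn : Measure ℝ := μ.withDensity fun x => ENNReal.ofReal ((1 + x ^ 2) ^ n)
  have hμn : HasAllMoments μn := hmom.withDensity_one_add_sq_pow n
  have hle : μ.withDensity w ≤ K • μn :=
    (withDensity_mono hw).trans_eq (withDensity_smul (K : ENNReal) (by fun_prop))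
  have hbounded : PolyEvalBoundedNear (μ.withDensity w) a :=
    polyEvalBoundedNear_of_not_polyDense ((hμn.smul K).mono hle) hd a
  have hunweighted : PolyEvalBoundedNear μ a :=
    (hbounded.of_le_smul hμn hle).of_withDensity_one_add_sq_pow hmom ha hmass
  exact hunweighted.not_isDeterminate hmom hmass hdet

theorem stmt3 (μ : Measure ℝ) (hmom : HasAllMoments μ) (hinf : (mSupp μ).Infinite)
    (hdet : IsDeterminate μ) (hsupp : mSupp μ ⊆ Set.Ici (0 : ℝ))
    (h0 : (0 : ℝ) ∈ mSupp μ) (hmass : μ {0} = 0) :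
    ∀ k : ℕ, PolyDense (μ.withDensity fun x => ENNReal.ofReal (x ^ k)) := by
  exact fun k => stmt3_general hmom hdet h0 hmass (K := 1) (n := k)
    (ae_of_all _ fun x => by simpa using ofReal_pow_le_ofReal_one_add_sq_pow x k)
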